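/- Suppose the coordinates u are normalized, B(u) satisfies the matching condition, and α = min{α_i : i ∈ J} < ∞. Then there exists a constant C > 0, depending only on the system, such that for any C^1 solution u = u(t,x) with |u| small, the source term G_i of the characteristic-form decomposition of w_i satisfies, for each i = 1,…,n: |G_i(t,x)| ≤ C [ Σ_{j≠k} ( |w_j w_k| + |v_j w_k| ) + Σ_{j≠i} |v_j| w_i² + |u_i|^α w_i² ]. -/

import Mathlib

open scoped ENNReal
open MeasureTheory Matrix Set Filter Topology

noncomputable section

/-- The state space `ℝⁿ`, realized as `Fin n → ℝ`. -/
abbrev V (n : ℕ) := Fin n → ℝ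

/-- The Euclidean norm on `Fin n → ℝ`. -/
def eunorm {n : ℕ} (v : V n) : ℝ := Real.sqrt (∑ i, v i ^ 2)

/-- The `i`-th standard basis vector `e_i`. -/
def eb {n : ℕ} (i : Fin n) : V n := Pi.single i 1

/-- A first-order quasilinear strictly hyperbolic system
`∂u/∂t + A(u) ∂u/∂x = B(u)`, with suitably smooth coefficients on the
neighborhood `{|u| < δ}` of `u = 0`, real distinct eigenvalues
`λ_1(u) < ⋯ < λ_n(u)` and complete systems of left/right eigenvectors
normalized by `l_i(u) r_j(u) ≡ δ_ij`, `r_i(u)ᵀ r_i(u) ≡ 1`. -/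
structure HypSys (n : ℕ) where
  A : V n → Matrix (Fin n) (Fin n) ℝ
  B : V n → V n
  lam : Fin n → V n → ℝ
  l : Fin n → V n → V n
  r : Fin n → V n → V n
  δ : ℝ
  δ_pos : 0 < δ
  smooth_A : ∀ i j : Fin n, ContDiffOn ℝ (⊤ : ℕ∞) (fun u => A u i j) {u | eunorm u < δ}
  smooth_B : ContDiffOn ℝ (⊤ : ℕ∞) B {u | eunorm u < δ}
  smooth_lam : ∀ i : Fin n, ContDiffOn ℝ (⊤ : ℕ∞) (lam i) {u | eunorm u < δ}
  smooth_l : ∀ i : Fin n, ContDiffOn ℝ (⊤ : ℕ∞) (l i) {u | eunorm u < δ}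
  smooth_r : ∀ i : Fin n, ContDiffOn ℝ (⊤ : ℕ∞) (r i) {u | eunorm u < δ}
  strict_hyp : ∀ u : V n, eunorm u < δ → ∀ i j : Fin n, i < j → lam i u < lam j u
  eig_r : ∀ u : V n, eunorm u < δ → ∀ i, Matrix.mulVec (A u) (r i u) = lam i u • r i u
  eig_l : ∀ u : V n, eunorm u < δ → ∀ i, Matrix.vecMul (l i u) (A u) = lam i u • l i u
  norm_lr : ∀ u : V n, eunorm u < δ → ∀ i j : Fin n, l i u ⬝ᵥ r j u = if i = j then 1 else 0
  norm_rr : ∀ u : V n, eunorm u < δ → ∀ i : Fin n, r i u ⬝ᵥ r i u = 1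

namespace HypSys

variable {n : ℕ} (S : HypSys n)

/-- Normalized coordinates: `r_i(u_i e_i) ≡ e_i` for `|u_i|` small. -/
def Normalized : Prop := ∀ i : Fin n, ∀ s : ℝ, |s| < S.δ → S.r i (s • eb i) = eb i

/-- Matching condition for the inhomogeneous term: `B(u_i e_i) ≡ 0` for `|u_i|` small. -/
def Matching : Prop := ∀ i : Fin n, ∀ s : ℝ, |s| < S.δ → S.B (s • eb i) = 0

/-- In normalized coordinates, `∂^k λ_i / ∂u_i^k (0)`. -/
def axisDeriv (i : Fin n) (k : ℕ) : ℝ := iteratedDeriv k (fun s : ℝ => S.lam i (s • eb i)) 0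

/-- The `i`-th characteristic field is weakly linearly degenerate:
`λ_i(u_i e_i) ≡ λ_i(0)` for `|u_i|` small (in normalized coordinates). -/
def WLD (i : Fin n) : Prop := ∀ s : ℝ, |s| < S.δ → S.lam i (s • eb i) = S.lam i 0

/-- `α_i = a`: the derivatives `∂^k λ_i/∂u_i^k (0)` vanish for `k = 1, …, a`
but not for `k = a + 1`. -/
def IsAlphaOf (i : Fin n) (a : ℕ) : Prop :=
  (∀ k : ℕ, 1 ≤ k → k ≤ a → S.axisDeriv i k = 0) ∧ S.axisDeriv i (a + 1) ≠ 0

/-- `a = α = min { α_i : i ∈ J } < ∞`, where `J` is the set of non weakly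
linearly degenerate indices.  (In particular the system is not weakly
linearly degenerate.) -/
def IsMinAlpha (a : ℕ) : Prop :=
  (∃ i : Fin n, ¬ S.WLD i ∧ S.IsAlphaOf i a) ∧
    ∀ i : Fin n, ¬ S.WLD i → ∀ b : ℕ, S.IsAlphaOf i b → a ≤ b

/-- `b_i(u) = l_i(u) B(u)`. -/
def bcoef (i : Fin n) (u : V n) : ℝ := S.l i u ⬝ᵥ S.B u

/-- `β_{ijk}(u) = (λ_k(u) − λ_i(u)) l_i(u) ∇r_j(u) r_k(u)`. -/
def beta (i j k : Fin n) (u : V n) : ℝ :=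
  (S.lam k u - S.lam i u) * (S.l i u ⬝ᵥ fderiv ℝ (S.r j) u (S.r k u))

/-- `ν_{ijk}(u) = − l_i(u) ∇r_j(u) r_k(u)`. -/
def nu (i j k : Fin n) (u : V n) : ℝ := -(S.l i u ⬝ᵥ fderiv ℝ (S.r j) u (S.r k u))

/-- `γ_{ijk}(u) = (λ_k(u) − λ_j(u)) l_i(u) ∇r_j(u) r_k(u) − ∇λ_j(u) r_k(u) δ_ij`. -/
def gamma (i j k : Fin n) (u : V n) : ℝ :=
  (S.lam k u - S.lam j u) * (S.l i u ⬝ᵥ fderiv ℝ (S.r j) u (S.r k u)) -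
    (if i = j then fderiv ℝ (S.lam j) u (S.r k u) else 0)

/-- `σ_{ijk}(u) = l_i(u) (∇r_k(u) r_j(u) − ∇r_j(u) r_k(u))`. -/
def sigma (i j k : Fin n) (u : V n) : ℝ :=
  S.l i u ⬝ᵥ (fderiv ℝ (S.r k) u (S.r j u) - fderiv ℝ (S.r j) u (S.r k u))

/-- `β̃_{ijk}(u) = β_{ijk}(u) + ∇λ_i(u) r_k(u) δ_ij`. -/
def betaT (i j k : Fin n) (u : V n) : ℝ :=
  S.beta i j k u + (if i = j then fderiv ℝ (S.lam i) u (S.r k u) else 0)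

/-- `γ̃_{ijk}(u) = γ_{ijk}(u) + ½ [∇λ_j(u) r_k(u) δ_ij + ∇λ_k(u) r_j(u) δ_ik]`. -/
def gammaT (i j k : Fin n) (u : V n) : ℝ :=
  S.gamma i j k u + (1 / 2) *
    ((if i = j then fderiv ℝ (S.lam j) u (S.r k u) else 0) +
     (if i = k then fderiv ℝ (S.lam k) u (S.r j u) else 0))

/-- `b̃_{ik}(u) = Σ_l (∂b_i/∂u_l)(u) r_{kl}(u)`. -/
def btilde (i k : Fin n) (u : V n) : ℝ :=
  ∑ m : Fin n, fderiv ℝ (S.bcoef i) u (Pi.single m 1) * S.r k u m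

/-- `u` is a `C¹` solution of the Cauchy problem on `[0,T] × ℝ`, with initial
data `u0`, staying in the neighborhood `{|u| < δ}` of `u = 0`. -/
structure IsSolutionOn (u : ℝ → ℝ → V n) (u0 : ℝ → V n) (T : ℝ) : Prop where
  smooth : ContDiffOn ℝ 1 (fun p : ℝ × ℝ => u p.1 p.2) (Icc 0 T ×ˢ univ)
  small : ∀ t ∈ Icc (0 : ℝ) T, ∀ x : ℝ, eunorm (u t x) < S.δ
  pde : ∀ t ∈ Icc (0 : ℝ) T, ∀ x : ℝ,
    derivWithin (fun s => u s x) (Icc 0 T) t +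
      Matrix.mulVec (S.A (u t x)) (deriv (fun y => u t y) x) = S.B (u t x)
  init : ∀ x : ℝ, u 0 x = u0 x

/-- The lifespan `T̃` of the Cauchy problem with initial data `u0`
(as an extended nonnegative real). -/
def lifespan (u0 : ℝ → V n) : ℝ≥0∞ :=
  ⨆ (T : ℝ) (_ : ∃ u : ℝ → ℝ → V n, S.IsSolutionOn u u0 T), ENNReal.ofReal T

/-- `v_i = l_i(u) u`. -/
def vC (u : ℝ → ℝ → V n) (i : Fin n) (t x : ℝ) : ℝ := S.l i (u t x) ⬝ᵥ u t x

/-- `w_i = l_i(u) u_x`. -/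
def wC (u : ℝ → ℝ → V n) (i : Fin n) (t x : ℝ) : ℝ :=
  S.l i (u t x) ⬝ᵥ deriv (fun y => u t y) x

/-- `v = (v_1, …, v_n)`. -/
def vV (u : ℝ → ℝ → V n) (t x : ℝ) : V n := fun i => S.vC u i t x

/-- `w = (w_1, …, w_n)`. -/
def wV (u : ℝ → ℝ → V n) (t x : ℝ) : V n := fun i => S.wC u i t x

/-- `U_∞(T) = sup_{0≤t≤T} sup_x |u(t,x)|`. -/
def Uinf (_S : HypSys n) (u : ℝ → ℝ → V n) (T : ℝ) : ℝ :=
  ⨆ p : Icc (0 : ℝ) T × ℝ, eunorm (u p.1.1 p.2)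

/-- `V_∞(T) = sup_{0≤t≤T} sup_x |v(t,x)|`. -/
def Vinf (u : ℝ → ℝ → V n) (T : ℝ) : ℝ :=
  ⨆ p : Icc (0 : ℝ) T × ℝ, eunorm (S.vV u p.1.1 p.2)

/-- `W_∞(T) = sup_{0≤t≤T} sup_x |w(t,x)|`. -/
def Winf (u : ℝ → ℝ → V n) (T : ℝ) : ℝ :=
  ⨆ p : Icc (0 : ℝ) T × ℝ, eunorm (S.wV u p.1.1 p.2)

/-- `V_1(T) = sup_{0≤t≤T} ∫_ℝ |v(t,x)| dx`. -/
def V1 (u : ℝ → ℝ → V n) (T : ℝ) : ℝ :=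
  ⨆ t : Icc (0 : ℝ) T, ∫ x : ℝ, eunorm (S.vV u t.1 x)

/-- `W_1(T) = sup_{0≤t≤T} ∫_ℝ |w(t,x)| dx`. -/
def W1 (u : ℝ → ℝ → V n) (T : ℝ) : ℝ :=
  ⨆ t : Icc (0 : ℝ) T, ∫ x : ℝ, eunorm (S.wV u t.1 x)

/-- `ξ` is a `j`-th characteristic curve on `[0,T]`:  `ξ'(t) = λ_j(u(t, ξ(t)))`. -/
def IsChar (u : ℝ → ℝ → V n) (j : Fin n) (T : ℝ) (ξ : ℝ → ℝ) : Prop :=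
  ∀ t ∈ Icc (0 : ℝ) T, HasDerivWithinAt ξ (S.lam j (u t (ξ t))) (Icc 0 T) t

/-- `Ṽ_1(T) = max_{i≠j} sup_{C̃_j} ∫_{C̃_j} |v_i| dt`. -/
def V1t (u : ℝ → ℝ → V n) (T : ℝ) : ℝ :=
  sSup {A : ℝ | ∃ i j : Fin n, i ≠ j ∧ ∃ ξ : ℝ → ℝ, S.IsChar u j T ξ ∧
    A = ∫ t in Icc (0 : ℝ) T, |S.vC u i t (ξ t)|}

/-- `W̃_1(T) = max_{i≠j} sup_{C̃_j} ∫_{C̃_j} |w_i| dt`. -/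
def W1t (u : ℝ → ℝ → V n) (T : ℝ) : ℝ :=
  sSup {A : ℝ | ∃ i j : Fin n, i ≠ j ∧ ∃ ξ : ℝ → ℝ, S.IsChar u j T ξ ∧
    A = ∫ t in Icc (0 : ℝ) T, |S.wC u i t (ξ t)|}

/-- `Q_W(T) = Σ_{j≠k} ∫∫ |w_j||w_k|`. -/
def QW (u : ℝ → ℝ → V n) (T : ℝ) : ℝ :=
  ∑ j : Fin n, ∑ k : Fin n, if j = k then 0 else
    ∫ t in Icc (0 : ℝ) T, ∫ x : ℝ, |S.wC u j t x| * |S.wC u k t x|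

/-- `Q_{VW}(T) = Σ_{j≠k} ∫∫ |v_j||w_k|`. -/
def QVW (u : ℝ → ℝ → V n) (T : ℝ) : ℝ :=
  ∑ j : Fin n, ∑ k : Fin n, if j = k then 0 else
    ∫ t in Icc (0 : ℝ) T, ∫ x : ℝ, |S.vC u j t x| * |S.wC u k t x|

/-- `Q_V(T) = Σ_{j≠k} ∫∫ |v_j||v_k|`. -/
def QV (u : ℝ → ℝ → V n) (T : ℝ) : ℝ :=
  ∑ j : Fin n, ∑ k : Fin n, if j = k then 0 else
    ∫ t in Icc (0 : ℝ) T, ∫ x : ℝ, |S.vC u j t x| * |S.vC u k t x|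

/-- The coefficient `a_0(t;i,y) = γ_{iii}(u)` of the Riccati equation (5.5),
evaluated at `(t,x)`. -/
def ricA0 (u : ℝ → ℝ → V n) (i : Fin n) (t x : ℝ) : ℝ := S.gamma i i i (u t x)

/-- The coefficient `a_1(t;i,y)` of the Riccati equation (5.5), evaluated at `(t,x)`. -/
def ricA1 (u : ℝ → ℝ → V n) (i : Fin n) (t x : ℝ) : ℝ :=
  (∑ j : Fin n, if j = i then 0 else
      (S.gamma i i j (u t x) + S.gamma i j i (u t x)) * S.wC u j t x)
  + (∑ j : Fin n, S.sigma i j i (u t x) * S.bcoef j (u t x))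
  + (S.btilde i i (u t x) - S.btilde i i ((u t x i) • eb i))

/-- The coefficient `a_2(t;i,y)` of the Riccati equation (5.5), evaluated at `(t,x)`. -/
def ricA2 (u : ℝ → ℝ → V n) (i : Fin n) (t x : ℝ) : ℝ :=
  (∑ j : Fin n, ∑ k : Fin n, if j = k ∨ j = i ∨ k = i then 0 else
      S.gamma i j k (u t x) * S.wC u j t x * S.wC u k t x)
  + (∑ j : Fin n, ∑ k : Fin n, if k = i then 0 else
      S.sigma i j k (u t x) * S.bcoef j (u t x) * S.wC u k t x)
  + (∑ k : Fin n, if k = i then 0 else S.btilde i k (u t x) * S.wC u k t x)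

/-- `u` is a `C¹` solution of the system on the open set `Ω`, with values in
the neighborhood `{|u| < δ}`. -/
structure IsSol1On (u : ℝ → ℝ → V n) (Ω : Set (ℝ × ℝ)) : Prop where
  isOpen : IsOpen Ω
  smooth : ContDiffOn ℝ 1 (fun p : ℝ × ℝ => u p.1 p.2) Ω
  small : ∀ p ∈ Ω, eunorm (u p.1 p.2) < S.δ
  pde : ∀ p ∈ Ω, deriv (fun s => u s p.2) p.1 +
    Matrix.mulVec (S.A (u p.1 p.2)) (deriv (fun y => u p.1 y) p.2) = S.B (u p.1 p.2)

/-- `u` is a `C²` solution of the system on the open set `Ω`, with values in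
the neighborhood `{|u| < δ}`. -/
structure IsSol2On (u : ℝ → ℝ → V n) (Ω : Set (ℝ × ℝ)) : Prop where
  isOpen : IsOpen Ω
  smooth : ContDiffOn ℝ 2 (fun p : ℝ × ℝ => u p.1 p.2) Ω
  small : ∀ p ∈ Ω, eunorm (u p.1 p.2) < S.δ
  pde : ∀ p ∈ Ω, deriv (fun s => u s p.2) p.1 +
    Matrix.mulVec (S.A (u p.1 p.2)) (deriv (fun y => u p.1 y) p.2) = S.B (u p.1 p.2)

end HypSys

/-- The family of initial data `u(0,x) = f(ε,x)`: `f` is `C¹` in `(ε,x)`,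
`f(0,x) ≡ 0`, `∂²f/∂ε∂x(·,x)` is uniformly `C^r` (Hölder) on `[0,ε₁]`,
`ψ(x) = ∂f/∂ε(0,x)` is `C¹`, and `M = sup_x |ψ'(x)| < ∞`. -/
structure InitData (n : ℕ) where
  f : ℝ → ℝ → V n
  ε₁ : ℝ
  ε₁_pos : 0 < ε₁
  rexp : ℝ
  rexp_pos : 0 < rexp
  rexp_le_one : rexp ≤ 1
  smooth : ContDiff ℝ 1 (fun p : ℝ × ℝ => f p.1 p.2)
  zero : ∀ x : ℝ, f 0 x = 0
  psi_smooth : ContDiff ℝ 1 (fun x : ℝ => deriv (fun e => f e x) 0)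
  M_bdd : BddAbove (Set.range fun x : ℝ =>
    eunorm (deriv (fun x' : ℝ => deriv (fun e => f e x') 0) x))
  holder : ∃ CH : ℝ, ∀ x ε ε' : ℝ, ε ∈ Set.Icc 0 ε₁ → ε' ∈ Set.Icc 0 ε₁ →
    eunorm (deriv (fun e => deriv (fun y => f e y) x) ε
      - deriv (fun e => deriv (fun y => f e y) x) ε') ≤ CH * |ε - ε'| ^ rexp

namespace InitData

variable {n : ℕ} (D : InitData n)

/-- `ψ(x) = ∂f/∂ε(0,x)`. -/
def psi : ℝ → V n := fun x => deriv (fun e => D.f e x) 0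

/-- `M = sup_x |ψ'(x)|`. -/
def M : ℝ := ⨆ x : ℝ, eunorm (deriv D.psi x)

/-- The smallness conditions (1.17) on the initial data:
`∫|∂f/∂x(ε,·)| ≤ K₁ ε` and `∫|f(ε,·)| ≤ K₂ ε / (M+1)`. -/
def Small (K1 K2 ε : ℝ) : Prop :=
  Integrable (fun x : ℝ => eunorm (deriv (fun y => D.f ε y) x)) ∧
  Integrable (fun x : ℝ => eunorm (D.f ε x)) ∧
  (∫ x : ℝ, eunorm (deriv (fun y => D.f ε y) x)) ≤ K1 * ε ∧
  (∫ x : ℝ, eunorm (D.f ε x)) ≤ K2 / (D.M + 1) * ε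

end InitData

/-- The right-hand side of the sharp lifespan formula (1.26):
`max_{i∈J₁} sup_{x∈ℝ} ( −(1/α!) ∂^{α+1}λ_i/∂u_i^{α+1}(0) ψ_i(x)^α ψ_i'(x) )`. -/
def blowRate {n : ℕ} (S : HypSys n) (D : InitData n) (a : ℕ) : ℝ :=
  ⨆ i : {i : Fin n // ¬ S.WLD i ∧ S.IsAlphaOf i a}, ⨆ x : ℝ,
    (-(1 / (Nat.factorial a : ℝ)) * S.axisDeriv i.1 (a + 1) * (D.psi x) i.1 ^ a *
      deriv (fun x' => (D.psi x') i.1) x)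

/-!
For a `C¹` function `u`, the source term is a polynomial in `w` with coefficients depending on `u`:
`G_i = ∑ γ_{ijk} w_j w_k + ∑ (∑ σ_{ijk} b_k + b̃_{ij}) w_j`. Each coefficient is estimated near
`u = 0` by comparing it with its value on a coordinate axis.

* The matching condition makes the coefficient of `w_j` vanish on the `j`-th axis, so it is
  `O(|u - u_j e_j|)`.
* `γ_{ijj} = 0` for `j ≠ i`, while on the `i`-th axis `γ_{iii} = -∂λ_i/∂u_i`, which is
  `O(|u_i|^α)` by Taylor's theorem; hence `γ_{iii} = O(|u - u_i e_i| + |u_i|^α)`.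
* In normalized coordinates `v(u) - u` vanishes on every axis, so its derivative at `0` is zero and
  it is `o(|u - u_i e_i|)`; hence `|u - u_i e_i| = O(∑_{j ≠ i} |v_j|)`.
-/

section

open Asymptotics

section EuclideanNorm

variable {n : ℕ}

theorem abs_apply_le_eunorm (u : V n) (i : Fin n) : |u i| ≤ eunorm u :=
  Real.abs_le_sqrt <|
    Finset.single_le_sum (f := fun j => u j ^ 2) (fun _ _ => sq_nonneg _) (Finset.mem_univ i)

theorem continuous_eunorm : Continuous (eunorm : V n → ℝ) := by
  unfold eunorm
  fun_prop

theorem eunorm_smul_eb (i : Fin n) (s : ℝ) : eunorm (s • eb i : V n) = |s| := by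
  simp [eunorm, eb, Pi.single_apply, Real.sqrt_sq_eq_abs]

theorem exists_forall_eunorm_lt {P : V n → Prop} (hP : ∀ᶠ u in 𝓝 0, P u) :
    ∃ ε > 0, ∀ u, eunorm u < ε → P u := by
  obtain ⟨ε, hε, h⟩ := Metric.eventually_nhds_iff.1 hP
  refine ⟨ε, hε, fun u hu => h ?_⟩
  exact (dist_pi_lt_iff hε).2 fun i => by
    simpa [Real.dist_eq] using (abs_apply_le_eunorm u i).trans_lt hu

end EuclideanNorm

section Calculus

theorem exists_pos_forall_isBigOWith {ι α E F : Type*} [Finite ι] [Norm E]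
    [SeminormedAddCommGroup F] {l : Filter α} {f : ι → α → E} {g : ι → α → F}
    (h : ∀ i, f i =O[l] g i) : ∃ C > 0, ∀ i, IsBigOWith C l (f i) (g i) := by
  have hC : ∀ᶠ C in atTop, ∀ i, IsBigOWith C l (f i) (g i) :=
    eventually_all.2 fun i => isBigO_iff_eventually_isBigOWith.1 (h i)
  exact ((eventually_gt_atTop 0).and hC).exists

theorem isBigO_pow_of_iteratedDeriv_eq_zero {E : Type*} [NormedAddCommGroup E] [NormedSpace ℝ E]
    {f : ℝ → E} {x₀ : ℝ} {a : ℕ} (hf : ContDiffAt ℝ a f x₀)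
    (hzero : ∀ k < a, iteratedDeriv k f x₀ = 0) : f =O[𝓝 x₀] fun x => (x - x₀) ^ a := by
  obtain ⟨ε, hε, hball⟩ := Metric.eventually_nhds_iff_ball.1 (hf.eventually (by simp))
  have hx₀ : x₀ ∈ Metric.ball x₀ ε := Metric.mem_ball_self hε
  have hpoly : ∀ x, taylorWithinEval f a (Metric.ball x₀ ε) x₀ x =
      ((a.factorial : ℝ)⁻¹ * (x - x₀) ^ a) • iteratedDeriv a f x₀ := fun x => by
    have hderiv : ∀ k, iteratedDerivWithin k f (Metric.ball x₀ ε) x₀ = iteratedDeriv k f x₀ :=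
      fun k => iteratedDerivWithin_of_isOpen Metric.isOpen_ball hx₀
    simp only [taylor_within_apply, hderiv, Finset.sum_range_succ]
    rw [Finset.sum_eq_zero fun k hk => by rw [hzero k (Finset.mem_range.1 hk), smul_zero], zero_add]
  have hremainder : (fun x => f x - taylorWithinEval f a (Metric.ball x₀ ε) x₀ x) =o[𝓝 x₀]
      fun x => (x - x₀) ^ a := by
    simpa only [Metric.isOpen_ball.nhdsWithin_eq hx₀] using
      taylor_isLittleO (convex_ball x₀ ε) hx₀ fun x hx => (hball x hx).contDiffWithinAt
  have hmain : (fun x => taylorWithinEval f a (Metric.ball x₀ ε) x₀ x) =O[𝓝 x₀]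
      fun x => (x - x₀) ^ a := by
    refine IsBigO.of_bound (‖(a.factorial : ℝ)⁻¹‖ * ‖iteratedDeriv a f x₀‖) (.of_forall fun x => ?_)
    rw [hpoly, norm_smul, norm_mul, mul_right_comm]
  simpa only [sub_add_cancel] using hremainder.isBigO.add hmain

theorem contDiffAt_dotProduct {ι E : Type*} [Fintype ι] [NormedAddCommGroup E] [NormedSpace ℝ E]
    {m : WithTop ℕ∞} {f g : E → ι → ℝ} {x : E} (hf : ContDiffAt ℝ m f x)
    (hg : ContDiffAt ℝ m g x) : ContDiffAt ℝ m (fun y => f y ⬝ᵥ g y) x :=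
  ContDiffAt.sum fun i _ => (contDiffAt_pi.1 hf i).mul (contDiffAt_pi.1 hg i)

theorem contDiffAt_fderiv_apply {E F : Type*} [NormedAddCommGroup E] [NormedSpace ℝ E]
    [NormedAddCommGroup F] [NormedSpace ℝ F] {f : E → F} {g : E → E} {x : E}
    (hf : ContDiffAt ℝ (⊤ : ℕ∞) f x) (hg : ContDiffAt ℝ (⊤ : ℕ∞) g x) :
    ContDiffAt ℝ (⊤ : ℕ∞) (fun y => fderiv ℝ f y (g y)) x :=
  (hf.fderiv_right le_rfl).clm_apply hg

end Calculus

section Axis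

variable {n : ℕ} {E : Type*} [NormedAddCommGroup E] [NormedSpace ℝ E] {F : V n → E}

/-- The transversal part `u - u_i e_i` of `u` with respect to the `i`-th coordinate axis. -/
def offAxis (i : Fin n) : V n →L[ℝ] V n :=
  ContinuousLinearMap.id ℝ (V n) - (ContinuousLinearMap.proj i).smulRight (eb i)

theorem offAxis_apply (i : Fin n) (u : V n) : offAxis i u = u - u i • eb i := rfl

theorem norm_offAxis_le (i : Fin n) (u : V n) :
    ‖offAxis i u‖ ≤ ∑ j, if j = i then 0 else |u j| := by
  have hnonneg : ∀ j, 0 ≤ if j = i then 0 else |u j| := fun j => by positivity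
  refine (pi_norm_le_iff_of_nonneg (Finset.sum_nonneg fun j _ => hnonneg j)).2 fun j => ?_
  refine le_trans ?_ (Finset.single_le_sum (fun j _ => hnonneg j) (Finset.mem_univ j))
  by_cases hj : j = i <;> simp [offAxis_apply, eb, hj]

theorem tendsto_apply_smul_eb (i : Fin n) :
    Tendsto (fun u : V n => u i • (eb i : V n)) (𝓝 0) (𝓝 0) := by
  have hcont : Continuous fun u : V n => u i • (eb i : V n) := by fun_prop
  simpa using hcont.tendsto 0

theorem tendsto_prodMk_apply_smul_eb (i : Fin n) :
    Tendsto (fun u : V n => (u, u i • (eb i : V n))) (𝓝 0) (𝓝 (0, 0)) :=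
  tendsto_id.prodMk_nhds (tendsto_apply_smul_eb i)

theorem isBigO_sub_axis (hF : ContDiffAt ℝ 1 F 0) (i : Fin n) :
    (fun u => F u - F (u i • eb i)) =O[𝓝 0] offAxis i :=
  (hF.hasStrictFDerivAt one_ne_zero).isBigO_sub.comp_tendsto (tendsto_prodMk_apply_smul_eb i)

theorem hasDerivAt_comp_smul_eb {i : Fin n} {s : ℝ} (hF : DifferentiableAt ℝ F (s • eb i)) :
    HasDerivAt (fun t : ℝ => F (t • eb i)) (fderiv ℝ F (s • eb i) (eb i)) s := by
  have haxis : HasDerivAt (fun t : ℝ => t • (eb i : V n)) (eb i) s := by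
    simpa using (hasDerivAt_id s).smul_const (eb i : V n)
  exact hF.hasFDerivAt.comp_hasDerivAt s haxis

theorem fderiv_apply_eb_eq_zero {i : Fin n} {s : ℝ} (hF : DifferentiableAt ℝ F (s • eb i))
    (hzero : ∀ᶠ t : ℝ in 𝓝 s, F (t • eb i) = 0) : fderiv ℝ F (s • eb i) (eb i) = 0 :=
  (hasDerivAt_comp_smul_eb hF).unique ((hasDerivAt_const s 0).congr_of_eventuallyEq hzero)

theorem isLittleO_offAxis (hF : ContDiffAt ℝ 1 F 0)
    (hzero : ∀ i, ∀ᶠ s : ℝ in 𝓝 0, F (s • eb i) = 0) (i : Fin n) : F =o[𝓝 0] offAxis i := by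
  have hfderiv : fderiv ℝ F 0 = 0 := by
    refine ContinuousLinearMap.coe_injective (LinearMap.pi_ext' fun j => LinearMap.ext_ring ?_)
    have hdiff : DifferentiableAt ℝ F ((0 : ℝ) • eb j) := by
      simpa using hF.differentiableAt one_ne_zero
    simpa [eb] using fderiv_apply_eb_eq_zero hdiff (hzero j)
  have hsub : (fun u => F u - F (u i • eb i)) =o[𝓝 0] offAxis i := by
    have hstrict := (hF.hasStrictFDerivAt one_ne_zero).isLittleO
    simp only [hfderiv, _root_.zero_apply, sub_zero] at hstrict
    exact hstrict.comp_tendsto (tendsto_prodMk_apply_smul_eb i)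
  have hproj : Tendsto (fun u : V n => u i) (𝓝 0) (𝓝 0) := (continuous_apply i).tendsto 0
  refine hsub.congr' ?_ .rfl
  filter_upwards [hproj.eventually (hzero i)] with u hu
  rw [hu, sub_zero]

end Axis

section Majorant

variable {n : ℕ}

/-- The right-hand side of the bound on `G_i`, up to the constant factor, as a function of the
values of `u`, `v` and `w` at a point. -/
def sourceMajorant (a : ℕ) (i : Fin n) (u v w : V n) : ℝ :=
  (∑ j, ∑ k, if j = k then 0 else |w j * w k| + |v j * w k|) +
    (∑ j, if j = i then 0 else |v j| * w i ^ 2) + |u i| ^ a * w i ^ 2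

variable (a : ℕ) (i : Fin n) (u v w : V n)

theorem sourceMajorant_nonneg : 0 ≤ sourceMajorant a i u v w := by
  unfold sourceMajorant
  positivity

theorem sum_sum_le_sourceMajorant :
    (∑ j, ∑ k, if j = k then 0 else |w j * w k| + |v j * w k|) ≤ sourceMajorant a i u v w := by
  rw [sourceMajorant, add_assoc]
  exact le_add_of_nonneg_right (by positivity)

theorem abs_mul_le_sourceMajorant {j k : Fin n} (hjk : j ≠ k) :
    |w j * w k| ≤ sourceMajorant a i u v w := by
  calc |w j * w k| ≤ |w j * w k| + |v j * w k| := le_add_of_nonneg_right (abs_nonneg _)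
    _ = if j = k then 0 else |w j * w k| + |v j * w k| := (if_neg hjk).symm
    _ ≤ ∑ k, if j = k then 0 else |w j * w k| + |v j * w k| :=
      Finset.single_le_sum (f := fun k => if j = k then 0 else |w j * w k| + |v j * w k|)
        (fun k _ => by positivity) (Finset.mem_univ k)
    _ ≤ ∑ j, ∑ k, if j = k then 0 else |w j * w k| + |v j * w k| :=
      Finset.single_le_sum (f := fun j => ∑ k, if j = k then 0 else |w j * w k| + |v j * w k|)
        (fun j _ => by positivity) (Finset.mem_univ j)
    _ ≤ _ := sum_sum_le_sourceMajorant a i u v w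

theorem norm_offAxis_mul_abs_le_sourceMajorant (j : Fin n) :
    ‖offAxis j v‖ * |w j| ≤ sourceMajorant a i u v w := by
  calc ‖offAxis j v‖ * |w j| ≤ (∑ k, if k = j then 0 else |v k|) * |w j| := by
        gcongr
        exact norm_offAxis_le j v
    _ = ∑ k, if k = j then 0 else |v k * w j| := by
        simp only [Finset.sum_mul, ite_mul, zero_mul, abs_mul]
    _ ≤ ∑ k, if k = j then 0 else |w k * w j| + |v k * w j| := by
        gcongr with k
        split_ifs
        · rfl
        · exact le_add_of_nonneg_left (abs_nonneg _)
    _ ≤ ∑ k, ∑ m, if k = m then 0 else |w k * w m| + |v k * w m| := by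
        gcongr with k
        exact Finset.single_le_sum (f := fun m => if k = m then 0 else |w k * w m| + |v k * w m|)
          (fun m _ => by positivity) (Finset.mem_univ j)
    _ ≤ _ := sum_sum_le_sourceMajorant a i u v w

theorem norm_offAxis_add_mul_sq_le_sourceMajorant :
    (‖offAxis i v‖ + |u i| ^ a) * w i ^ 2 ≤ sourceMajorant a i u v w := by
  calc (‖offAxis i v‖ + |u i| ^ a) * w i ^ 2
      ≤ ((∑ j, if j = i then 0 else |v j|) + |u i| ^ a) * w i ^ 2 := by
        gcongr
        exact norm_offAxis_le i v
    _ = (∑ j, if j = i then 0 else |v j| * w i ^ 2) + |u i| ^ a * w i ^ 2 := by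
        simp only [add_mul, Finset.sum_mul, ite_mul, zero_mul]
    _ ≤ _ := by
        rw [sourceMajorant, add_assoc]
        exact le_add_of_nonneg_left (by positivity)

end Majorant

namespace HypSys

variable {n : ℕ} {S : HypSys n}

theorem eunorm_zero_lt : eunorm (0 : V n) < S.δ := by
  simpa [eunorm] using S.δ_pos

theorem eventually_abs_lt : ∀ᶠ s : ℝ in 𝓝 0, |s| < S.δ :=
  continuous_abs.continuousAt.eventually_lt_const (by simpa using S.δ_pos)

section Smoothness

variable {u : V n}

theorem setOf_eunorm_lt_mem_nhds (hu : eunorm u < S.δ) : {u : V n | eunorm u < S.δ} ∈ 𝓝 u :=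
  (isOpen_lt continuous_eunorm continuous_const).mem_nhds hu

theorem contDiffAt_l (hu : eunorm u < S.δ) (i : Fin n) : ContDiffAt ℝ (⊤ : ℕ∞) (S.l i) u :=
  (S.smooth_l i).contDiffAt (setOf_eunorm_lt_mem_nhds hu)

theorem contDiffAt_r (hu : eunorm u < S.δ) (i : Fin n) : ContDiffAt ℝ (⊤ : ℕ∞) (S.r i) u :=
  (S.smooth_r i).contDiffAt (setOf_eunorm_lt_mem_nhds hu)

theorem contDiffAt_lam (hu : eunorm u < S.δ) (i : Fin n) : ContDiffAt ℝ (⊤ : ℕ∞) (S.lam i) u :=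
  (S.smooth_lam i).contDiffAt (setOf_eunorm_lt_mem_nhds hu)

theorem contDiffAt_bcoef (hu : eunorm u < S.δ) (i : Fin n) :
    ContDiffAt ℝ (⊤ : ℕ∞) (S.bcoef i) u :=
  contDiffAt_dotProduct (contDiffAt_l hu i)
    (S.smooth_B.contDiffAt (setOf_eunorm_lt_mem_nhds hu))

theorem contDiffAt_gamma (hu : eunorm u < S.δ) (i j k : Fin n) :
    ContDiffAt ℝ (⊤ : ℕ∞) (S.gamma i j k) u := by
  refine (((contDiffAt_lam hu k).sub (contDiffAt_lam hu j)).mul (contDiffAt_dotProduct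
    (contDiffAt_l hu i) (contDiffAt_fderiv_apply (contDiffAt_r hu j) (contDiffAt_r hu k)))).sub ?_
  split_ifs
  · exact contDiffAt_fderiv_apply (contDiffAt_lam hu j) (contDiffAt_r hu k)
  · exact contDiffAt_const

theorem contDiffAt_sigma (hu : eunorm u < S.δ) (i j k : Fin n) :
    ContDiffAt ℝ (⊤ : ℕ∞) (S.sigma i j k) u :=
  contDiffAt_dotProduct (contDiffAt_l hu i)
    ((contDiffAt_fderiv_apply (contDiffAt_r hu k) (contDiffAt_r hu j)).sub
      (contDiffAt_fderiv_apply (contDiffAt_r hu j) (contDiffAt_r hu k)))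

theorem contDiffAt_btilde (hu : eunorm u < S.δ) (i k : Fin n) :
    ContDiffAt ℝ (⊤ : ℕ∞) (S.btilde i k) u :=
  ContDiffAt.sum fun m _ => (contDiffAt_fderiv_apply (contDiffAt_bcoef hu i) contDiffAt_const).mul
    (contDiffAt_pi.1 (contDiffAt_r hu k) m)

end Smoothness

section EigenCoord

/-- The coordinates `(l_1(u) x, …, l_n(u) x)` of `x` in the basis of right eigenvectors at `u`.
Thus `v = eigenCoord u u` and `w = eigenCoord u u_x`. -/
def eigenCoord (S : HypSys n) (u x : V n) : V n := fun k => S.l k u ⬝ᵥ x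

theorem sum_eigenCoord_smul_r {u : V n} (hu : eunorm u < S.δ) (x : V n) :
    ∑ k, S.eigenCoord u x k • S.r k u = x := by
  let L : Matrix (Fin n) (Fin n) ℝ := .of fun i => S.l i u
  let R : Matrix (Fin n) (Fin n) ℝ := .of fun i => S.r i u
  have hLR : L * Rᵀ = 1 := by
    ext i j
    simpa [L, R, Matrix.mul_apply, Matrix.one_apply, dotProduct] using S.norm_lr u hu i j
  calc ∑ k, S.eigenCoord u x k • S.r k u = (L *ᵥ x) ᵥ* R := (Matrix.vecMul_eq_sum _ _).symm
    _ = (Rᵀ * L) *ᵥ x := by rw [← Matrix.mulVec_transpose, Matrix.mulVec_mulVec]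
    _ = x := by rw [mul_eq_one_comm.1 hLR, Matrix.one_mulVec]

theorem Normalized.eigenCoord_smul_eb (hNorm : S.Normalized) (i : Fin n) {s : ℝ}
    (hs : |s| < S.δ) : S.eigenCoord (s • eb i) (s • eb i) = s • eb i := by
  ext k
  have hdual := S.norm_lr (s • eb i) ((eunorm_smul_eb i s).trans_lt hs) k i
  rw [hNorm i s hs] at hdual
  rw [eigenCoord, dotProduct_smul, hdual]
  simp [eb, Pi.single_apply]

theorem Normalized.isLittleO_eigenCoord_sub (hNorm : S.Normalized) (i : Fin n) :
    (fun u => S.eigenCoord u u - u) =o[𝓝 0] offAxis i := by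
  refine isLittleO_offAxis ?_ (fun j => ?_) i
  · have hcoord : ContDiffAt ℝ (⊤ : ℕ∞) (fun u => S.eigenCoord u u) 0 :=
      contDiffAt_pi.2 fun k => contDiffAt_dotProduct (contDiffAt_l eunorm_zero_lt k) contDiffAt_id
    exact (hcoord.sub contDiffAt_id).of_le (by exact_mod_cast le_top)
  · filter_upwards [S.eventually_abs_lt] with s hs
    rw [hNorm.eigenCoord_smul_eb j hs, sub_self]

theorem Normalized.offAxis_isBigO_offAxis_eigenCoord (hNorm : S.Normalized) (i : Fin n) :
    offAxis i =O[𝓝 0] fun u => offAxis i (S.eigenCoord u u) := by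
  have hlittle : (fun u => offAxis i (S.eigenCoord u u - u)) =o[𝓝 0] offAxis i :=
    ((offAxis i).isBigO_comp _ _).trans_isLittleO (hNorm.isLittleO_eigenCoord_sub i)
  simpa only [Pi.add_def, map_sub, sub_add_cancel] using hlittle.right_isBigO_add

end EigenCoord

section LowerOrder

theorem btilde_eq_fderiv (i k : Fin n) (u : V n) :
    S.btilde i k u = fderiv ℝ (S.bcoef i) u (S.r k u) := by
  conv_rhs => rw [pi_eq_sum_univ' (S.r k u)]
  simp [btilde, map_sum, mul_comm]

theorem deriv_bcoef_comp {c : ℝ → V n} {x : ℝ} (hc : DifferentiableAt ℝ c x)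
    (hcx : eunorm (c x) < S.δ) (i : Fin n) :
    deriv (fun y => S.bcoef i (c y)) x =
      ∑ j, S.btilde i j (c x) * S.eigenCoord (c x) (deriv c x) j := by
  have hb : DifferentiableAt ℝ (S.bcoef i) (c x) :=
    (contDiffAt_bcoef hcx i).differentiableAt (by simp)
  calc deriv (fun y => S.bcoef i (c y)) x = fderiv ℝ (S.bcoef i) (c x) (deriv c x) :=
        (hb.hasFDerivAt.comp_hasDerivAt x hc.hasDerivAt).deriv
    _ = fderiv ℝ (S.bcoef i) (c x) (∑ j, S.eigenCoord (c x) (deriv c x) j • S.r j (c x)) := by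
        rw [sum_eigenCoord_smul_r hcx]
    _ = _ := by
        simp only [map_sum, map_smul, smul_eq_mul, btilde_eq_fderiv, mul_comm]

/-- The coefficient `∑_k σ_{ijk}(u) b_k(u) + b̃_{ij}(u)` of `w_j` in `G_i`. -/
def lowerOrderCoeff (S : HypSys n) (i j : Fin n) (u : V n) : ℝ :=
  (∑ k, S.sigma i j k u * S.bcoef k u) + S.btilde i j u

theorem contDiffAt_lowerOrderCoeff {u : V n} (hu : eunorm u < S.δ) (i j : Fin n) :
    ContDiffAt ℝ (⊤ : ℕ∞) (S.lowerOrderCoeff i j) u :=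
  (ContDiffAt.sum fun k _ => (contDiffAt_sigma hu i j k).mul (contDiffAt_bcoef hu k)).add
    (contDiffAt_btilde hu i j)

theorem Matching.bcoef_smul_eb (hMatch : S.Matching) (i j : Fin n) {s : ℝ} (hs : |s| < S.δ) :
    S.bcoef i (s • eb j) = 0 := by
  rw [bcoef, hMatch j s hs, dotProduct_zero]

theorem Matching.btilde_smul_eb (hMatch : S.Matching) (hNorm : S.Normalized) (i j : Fin n)
    {s : ℝ} (hs : |s| < S.δ) : S.btilde i j (s • eb j) = 0 := by
  have hb : DifferentiableAt ℝ (S.bcoef i) (s • eb j) :=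
    (contDiffAt_bcoef ((eunorm_smul_eb j s).trans_lt hs) i).differentiableAt (by simp)
  rw [btilde_eq_fderiv, hNorm j s hs]
  refine fderiv_apply_eb_eq_zero hb ?_
  filter_upwards [continuous_abs.continuousAt.eventually_lt_const hs] with t ht
  exact hMatch.bcoef_smul_eb i j ht

theorem Matching.lowerOrderCoeff_smul_eb (hMatch : S.Matching) (hNorm : S.Normalized)
    (i j : Fin n) {s : ℝ} (hs : |s| < S.δ) : S.lowerOrderCoeff i j (s • eb j) = 0 := by
  simp [lowerOrderCoeff, hMatch.bcoef_smul_eb _ j hs, hMatch.btilde_smul_eb hNorm i j hs]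

theorem Matching.isBigO_lowerOrderCoeff (hMatch : S.Matching) (hNorm : S.Normalized)
    (i j : Fin n) : S.lowerOrderCoeff i j =O[𝓝 0] offAxis j := by
  have hsmooth : ContDiffAt ℝ 1 (S.lowerOrderCoeff i j) 0 :=
    (contDiffAt_lowerOrderCoeff eunorm_zero_lt i j).of_le (by exact_mod_cast le_top)
  have hproj : Tendsto (fun u : V n => u j) (𝓝 0) (𝓝 0) := (continuous_apply j).tendsto 0
  refine (isBigO_sub_axis hsmooth j).congr' ?_ .rfl
  filter_upwards [hproj.eventually S.eventually_abs_lt] with u hu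
  rw [hMatch.lowerOrderCoeff_smul_eb hNorm i j hu, sub_zero]

end LowerOrder

section Gamma

theorem gamma_eq_zero_of_ne {i j : Fin n} (hij : i ≠ j) (u : V n) : S.gamma i j j u = 0 := by
  simp [gamma, hij]

theorem isBigO_gamma_one (i j k : Fin n) : S.gamma i j k =O[𝓝 0] fun _ => (1 : ℝ) :=
  (contDiffAt_gamma eunorm_zero_lt i j k).continuousAt.isBigO_one ℝ

theorem Normalized.gamma_smul_eb (hNorm : S.Normalized) (i : Fin n) {s : ℝ} (hs : |s| < S.δ) :
    S.gamma i i i (s • eb i) = -deriv (fun t : ℝ => S.lam i (t • eb i)) s := by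
  have hlam : DifferentiableAt ℝ (S.lam i) (s • eb i) :=
    (contDiffAt_lam ((eunorm_smul_eb i s).trans_lt hs) i).differentiableAt (by simp)
  simp [gamma, hNorm i s hs, (hasDerivAt_comp_smul_eb hlam).deriv]

theorem Normalized.iteratedDeriv_gamma_smul_eb (hNorm : S.Normalized) (i : Fin n) (k : ℕ) :
    iteratedDeriv k (fun s : ℝ => S.gamma i i i (s • eb i)) 0 = -S.axisDeriv i (k + 1) := by
  have hgamma : (fun s : ℝ => S.gamma i i i (s • eb i)) =ᶠ[𝓝 0]
      fun s => -deriv (fun t : ℝ => S.lam i (t • eb i)) s := by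
    filter_upwards [S.eventually_abs_lt] with s hs using hNorm.gamma_smul_eb i hs
  rw [hgamma.iteratedDeriv_eq, iteratedDeriv_fun_neg, axisDeriv, iteratedDeriv_succ']

theorem Normalized.isBigO_gamma_smul_eb (hNorm : S.Normalized) {a : ℕ} {i : Fin n}
    (hflat : ∀ k, 1 ≤ k → k ≤ a → S.axisDeriv i k = 0) :
    (fun s : ℝ => S.gamma i i i (s • eb i)) =O[𝓝 0] fun s => |s| ^ a := by
  have hgamma : ContDiffAt ℝ (⊤ : ℕ∞) (S.gamma i i i) ((0 : ℝ) • eb i) :=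
    contDiffAt_gamma (by simpa using S.eunorm_zero_lt) i i i
  have hsmooth : ContDiffAt ℝ a (fun s : ℝ => S.gamma i i i (s • eb i)) 0 :=
    (hgamma.comp (0 : ℝ) (contDiffAt_id.smul contDiffAt_const)).of_le (by exact_mod_cast le_top)
  have hTaylor := isBigO_pow_of_iteratedDeriv_eq_zero hsmooth fun k hk => by
    rw [hNorm.iteratedDeriv_gamma_smul_eb, hflat (k + 1) k.succ_pos hk, neg_zero]
  simpa only [sub_zero, norm_pow, Real.norm_eq_abs] using hTaylor.norm_right

theorem Normalized.isBigO_gamma_diag (hNorm : S.Normalized) {a : ℕ} {i : Fin n}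
    (hflat : ∀ k, 1 ≤ k → k ≤ a → S.axisDeriv i k = 0) :
    S.gamma i i i =O[𝓝 0] fun u => ‖offAxis i u‖ + |u i| ^ a := by
  have hsmooth : ContDiffAt ℝ 1 (S.gamma i i i) 0 :=
    (contDiffAt_gamma eunorm_zero_lt i i i).of_le (by exact_mod_cast le_top)
  have hproj : Tendsto (fun u : V n => u i) (𝓝 0) (𝓝 0) := (continuous_apply i).tendsto 0
  have hoff : (fun u => S.gamma i i i u - S.gamma i i i (u i • eb i)) =O[𝓝 0]
      fun u => ‖offAxis i u‖ + |u i| ^ a :=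
    (isBigO_sub_axis hsmooth i).trans <| .of_norm_le fun u =>
      le_add_of_nonneg_right (by positivity)
  have haxis : (fun u : V n => S.gamma i i i (u i • eb i)) =O[𝓝 0]
      fun u => ‖offAxis i u‖ + |u i| ^ a :=
    ((hNorm.isBigO_gamma_smul_eb hflat).comp_tendsto hproj).trans <| .of_norm_le fun u => by
      simp
  simpa only [sub_add_cancel] using hoff.add haxis

theorem IsMinAlpha.axisDeriv_eq_zero {a : ℕ} (hMin : S.IsMinAlpha a) (i : Fin n) {k : ℕ}
    (hk : 1 ≤ k) (hka : k ≤ a) : S.axisDeriv i k = 0 := by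
  by_cases hWLD : S.WLD i
  · have hconst : (fun s : ℝ => S.lam i (s • eb i)) =ᶠ[𝓝 0] fun _ => S.lam i 0 := by
      filter_upwards [S.eventually_abs_lt] with s hs using hWLD s hs
    rw [axisDeriv, hconst.iteratedDeriv_eq, iteratedDeriv_const, if_neg (by lia)]
  · induction k using Nat.strong_induction_on with
    | _ k ih =>
      by_contra hne
      have hAlpha : S.IsAlphaOf i (k - 1) :=
        ⟨fun m hm hmk => ih m (by lia) hm (by lia), by rwa [Nat.sub_add_cancel hk]⟩
      have hle := hMin.2 i hWLD _ hAlpha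
      lia

end Gamma

section SourceTerm

/-- `G_i` as a function of the values of `u` and `w` at a point, after `(b_i(u))_x` has been
written as `∑_j b̃_{ij}(u) w_j`. -/
def sourceTerm (S : HypSys n) (i : Fin n) (u w : V n) : ℝ :=
  (∑ j, ∑ k, S.gamma i j k u * w j * w k) + ∑ j, S.lowerOrderCoeff i j u * w j

theorem sourceTerm_eigenCoord_deriv {c : ℝ → V n} {x : ℝ} (hc : DifferentiableAt ℝ c x)
    (hcx : eunorm (c x) < S.δ) (i : Fin n) :
    S.sourceTerm i (c x) (S.eigenCoord (c x) (deriv c x)) =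
      (∑ j, ∑ k, S.gamma i j k (c x) * S.eigenCoord (c x) (deriv c x) j *
          S.eigenCoord (c x) (deriv c x) k) +
        (∑ j, ∑ k, S.sigma i j k (c x) * S.eigenCoord (c x) (deriv c x) j * S.bcoef k (c x)) +
        deriv (fun y => S.bcoef i (c y)) x := by
  rw [deriv_bcoef_comp hc hcx, sourceTerm, add_assoc]
  simp only [lowerOrderCoeff, add_mul, Finset.sum_mul, Finset.sum_add_distrib, mul_right_comm]

variable {a : ℕ} {i : Fin n}

theorem Normalized.isBigO_gamma_mul_mul (hNorm : S.Normalized)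
    (hflat : ∀ k, 1 ≤ k → k ≤ a → S.axisDeriv i k = 0) (j k : Fin n) :
    (fun p : V n × V n => S.gamma i j k p.1 * p.2 j * p.2 k) =O[𝓝 0 ×ˢ ⊤]
      fun p => sourceMajorant a i p.1 (S.eigenCoord p.1 p.1) p.2 := by
  rcases ne_or_eq j k with hjk | rfl
  · have hbounded : (fun p : V n × V n => S.gamma i j k p.1 * (p.2 j * p.2 k)) =O[𝓝 0 ×ˢ ⊤]
        fun p => 1 * (p.2 j * p.2 k) :=
      ((isBigO_gamma_one i j k).comp_tendsto tendsto_fst).mul (isBigO_refl _ _)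
    simp only [mul_assoc]
    refine hbounded.trans (.of_norm_le fun p => ?_)
    simpa only [one_mul, Real.norm_eq_abs] using abs_mul_le_sourceMajorant a i p.1 _ p.2 hjk
  rcases ne_or_eq i j with hij | rfl
  · simp only [gamma_eq_zero_of_ne hij, zero_mul]
    exact isBigO_zero _ _
  · have hdiag : S.gamma i i i =O[𝓝 0] fun u =>
        ‖offAxis i (S.eigenCoord u u)‖ + |u i| ^ a :=
      (hNorm.isBigO_gamma_diag hflat).trans <| by
        simpa only [norm_pow, norm_norm, Real.norm_eq_abs, abs_norm, abs_abs] using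
          (hNorm.offAxis_isBigO_offAxis_eigenCoord i).norm_norm.add_add
            (isBigO_refl (fun u : V n => |u i| ^ a) _)
    have hmul := (hdiag.comp_tendsto (tendsto_fst (g := ⊤))).mul
      (isBigO_refl (fun p : V n × V n => p.2 i ^ 2) _)
    simp only [mul_assoc, ← pow_two]
    refine hmul.trans (.of_norm_le fun p => ?_)
    rw [Real.norm_of_nonneg (by simp only [Function.comp_apply]; positivity)]
    exact norm_offAxis_add_mul_sq_le_sourceMajorant a i p.1 _ p.2

theorem Matching.isBigO_lowerOrderCoeff_mul (hMatch : S.Matching) (hNorm : S.Normalized)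
    (j : Fin n) :
    (fun p : V n × V n => S.lowerOrderCoeff i j p.1 * p.2 j) =O[𝓝 0 ×ˢ ⊤]
      fun p => sourceMajorant a i p.1 (S.eigenCoord p.1 p.1) p.2 := by
  have hcoeff := (hMatch.isBigO_lowerOrderCoeff hNorm i j).trans
    (hNorm.offAxis_isBigO_offAxis_eigenCoord j)
  refine ((hcoeff.norm_right.comp_tendsto tendsto_fst).mul
    (isBigO_refl (fun p : V n × V n => p.2 j) _)).trans (.of_norm_le fun p => ?_)
  rw [norm_mul, Function.comp_apply, norm_norm]
  exact norm_offAxis_mul_abs_le_sourceMajorant a i p.1 _ p.2 j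

theorem isBigO_sourceTerm (hNorm : S.Normalized) (hMatch : S.Matching)
    (hflat : ∀ k, 1 ≤ k → k ≤ a → S.axisDeriv i k = 0) :
    (fun p : V n × V n => S.sourceTerm i p.1 p.2) =O[𝓝 0 ×ˢ ⊤]
      fun p => sourceMajorant a i p.1 (S.eigenCoord p.1 p.1) p.2 :=
  (IsBigO.fun_sum fun j _ => IsBigO.fun_sum fun k _ =>
    hNorm.isBigO_gamma_mul_mul hflat j k).add
    (IsBigO.fun_sum fun j _ => hMatch.isBigO_lowerOrderCoeff_mul hNorm j)

theorem exists_forall_abs_sourceTerm_le (hNorm : S.Normalized) (hMatch : S.Matching)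
    (hflat : ∀ i k, 1 ≤ k → k ≤ a → S.axisDeriv i k = 0) :
    ∃ ε > 0, ∃ C > 0, ∀ u, eunorm u < ε → ∀ w i,
      |S.sourceTerm i u w| ≤ C * sourceMajorant a i u (S.eigenCoord u u) w := by
  obtain ⟨C, hC, hbound⟩ := exists_pos_forall_isBigOWith fun i =>
    isBigO_sourceTerm hNorm hMatch (hflat i)
  have hnear : ∀ᶠ u in 𝓝 0, ∀ w i,
      |S.sourceTerm i u w| ≤ C * sourceMajorant a i u (S.eigenCoord u u) w := by
    filter_upwards [mem_prod_top.1 (eventually_all.2 fun i => (hbound i).bound)] with u hu w i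
    simpa only [Real.norm_eq_abs, abs_of_nonneg (sourceMajorant_nonneg ..)] using hu w i
  obtain ⟨ε, hε, hball⟩ := exists_forall_eunorm_lt hnear
  exact ⟨ε, hε, C, hC, hball⟩

end SourceTerm

theorem IsSol1On.differentiableAt_right {u : ℝ → ℝ → V n} {Ω : Set (ℝ × ℝ)}
    (hu : S.IsSol1On u Ω) {p : ℝ × ℝ} (hp : p ∈ Ω) : DifferentiableAt ℝ (u p.1) p.2 := by
  have hdiff : DifferentiableAt ℝ (fun q : ℝ × ℝ => u q.1 q.2) p :=
    (hu.smooth.contDiffAt (hu.isOpen.mem_nhds hp)).differentiableAt one_ne_zero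
  exact hdiff.comp (f := fun y => (p.1, y)) p.2
    ((differentiableAt_const p.1).prodMk differentiableAt_id)

end HypSys

end

theorem stmt18_general {n : ℕ} (S : HypSys n) (hNorm : S.Normalized) (hMatch : S.Matching)
    (a : ℕ) (hflat : ∀ i k, 1 ≤ k → k ≤ a → S.axisDeriv i k = 0) :
    ∃ δ' : ℝ, 0 < δ' ∧ δ' ≤ S.δ ∧ ∃ C > (0 : ℝ),
    ∀ (u : ℝ → ℝ → V n) (t x : ℝ), DifferentiableAt ℝ (u t) x → eunorm (u t x) < δ' →
    ∀ i : Fin n,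
      |(∑ j, ∑ k, S.gamma i j k (u t x) * S.wC u j t x * S.wC u k t x) +
          (∑ j, ∑ k, S.sigma i j k (u t x) * S.wC u j t x * S.bcoef k (u t x)) +
          deriv (fun y => S.bcoef i (u t y)) x| ≤
        C * ((∑ j, ∑ k, if j = k then 0 else
                |S.wC u j t x * S.wC u k t x| + |S.vC u j t x * S.wC u k t x|) +
             (∑ j, if j = i then 0 else |S.vC u j t x| * S.wC u i t x ^ 2) +
             |u t x i| ^ a * S.wC u i t x ^ 2) := by
  obtain ⟨ε, hε, C, hC, hbound⟩ := HypSys.exists_forall_abs_sourceTerm_le hNorm hMatch hflat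
  refine ⟨min ε S.δ, lt_min hε S.δ_pos, min_le_right _ _, C, hC, fun u t x hu hsmall i => ?_⟩
  have hsource := hbound (u t x) (hsmall.trans_le (min_le_left _ _))
    (S.eigenCoord (u t x) (deriv (u t) x)) i
  rwa [HypSys.sourceTerm_eigenCoord_deriv hu (hsmall.trans_le (min_le_right _ _))] at hsource

/-- **The pointwise bound (3.16)** on the source term `G_i` of the
characteristic-form decomposition of `w_i`.  In normalized coordinates with
the matching condition and `α = min{α_i : i ∈ J} < ∞`, there is a constant
`C > 0` depending only on the system such that for any `C¹` solution `u` with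
`|u|` small:
`|G_i| ≤ C [Σ_{j≠k}(|w_j w_k| + |v_j w_k|) + Σ_{j≠i}|v_j| w_i² + |u_i|^α w_i²]`. -/
theorem stmt18 {n : ℕ} (S : HypSys n) (hNorm : S.Normalized) (hMatch : S.Matching)
    (a : ℕ) (hMin : S.IsMinAlpha a) :
    ∃ δ' : ℝ, 0 < δ' ∧ δ' ≤ S.δ ∧ ∃ C > (0 : ℝ),
    ∀ u : ℝ → ℝ → V n, ∀ Ω : Set (ℝ × ℝ), S.IsSol1On u Ω →
    (∀ p ∈ Ω, eunorm (u p.1 p.2) < δ') →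
    ∀ i : Fin n, ∀ p ∈ Ω,
      |(∑ j : Fin n, ∑ k : Fin n,
            S.gamma i j k (u p.1 p.2) * S.wC u j p.1 p.2 * S.wC u k p.1 p.2) +
          (∑ j : Fin n, ∑ k : Fin n,
            S.sigma i j k (u p.1 p.2) * S.wC u j p.1 p.2 * S.bcoef k (u p.1 p.2)) +
          deriv (fun y => S.bcoef i (u p.1 y)) p.2| ≤
        C * ((∑ j : Fin n, ∑ k : Fin n, if j = k then 0 else
                |S.wC u j p.1 p.2 * S.wC u k p.1 p.2| +
                  |S.vC u j p.1 p.2 * S.wC u k p.1 p.2|) +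
             (∑ j : Fin n, if j = i then 0 else
                |S.vC u j p.1 p.2| * S.wC u i p.1 p.2 ^ 2) +
             |u p.1 p.2 i| ^ a * S.wC u i p.1 p.2 ^ 2) := by
  obtain ⟨δ', hpos, hle, C, hC, hbound⟩ :=
    stmt18_general S hNorm hMatch a fun i _ => hMin.axisDeriv_eq_zero i
  exact ⟨δ', hpos, hle, C, hC, fun u Ω hu hsmall i p hp =>
    hbound u p.1 p.2 (hu.differentiableAt_right hp) (hsmall p hp) i⟩
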